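/- Let R be a basic left Harada algebra with modules P_{ij} := rad^{j-1}(e_{i1}R) as below, let I be the two-sided ideal I := ⊕_{i,j} rad^{n_i-j+1}(e_{ij}R), and set R̄ := R/I. For fixed i and indices 1 ≤ k < l ≤ n_i and 1 ≤ j ≤ n_i, the following are equivalent: (a) Ext^1_R(P_{ik}/P_{il}, P_{ij}) = 0; (b) j ≤ k or l < j; (c) Ext^1_{R̄}(P_{ik}/P_{il}, P_{ij}/rad(P_{i n_i})) = 0, where P_{ik}/P_{il} and P_{ij}/rad(P_{i n_i}) are regarded as right R̄-modules. -/

import Mathlib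

/-!
Common setup.  `K` is an algebraically closed field and `R` a finite-dimensional associative
unital `K`-algebra.  Right `R`-modules are formalized as modules over the opposite ring `Rᵐᵒᵖ`
(so that `MulOpposite.op r • x = x * r`).
-/

open MulOpposite

/-- The right ideal `xR` of a ring `R`, as a submodule of `R` over `Rᵐᵒᵖ`. -/
def rightIdeal (R : Type) [Ring R] (x : R) : Submodule Rᵐᵒᵖ R :=
  Submodule.span Rᵐᵒᵖ {x}

/-- The Jacobson radical of a submodule `N` (the intersection of the maximal submodules of the
module `N`), viewed as a submodule of the ambient module.  Iterating this operation gives the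
iterated radicals `rad^k`. -/
def radSub {A M : Type} [Ring A] [AddCommGroup M] [Module A M] (N : Submodule A M) :
    Submodule A M :=
  Submodule.map N.subtype (sInf {P : Submodule A ↥N | IsCoatom P})

/-- A module is indecomposable if it is nonzero and admits no nontrivial direct sum
decomposition. -/
def IsIndecomposableMod (A M : Type) [Ring A] [AddCommGroup M] [Module A M] : Prop :=
  Nontrivial M ∧ ∀ N N' : Submodule A M, IsCompl N N' → N = ⊥ ∨ N' = ⊥

/-- A module has projective dimension at most one iff it admits a surjection from a projective
module with projective kernel. -/
def PdLeOne (A : Type) [Ring A] (M : Type) [AddCommGroup M] [Module A M] : Prop :=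
  ∃ (P : ModuleCat.{0} A) (f : ↥P →ₗ[A] M),
    Module.Projective A ↥P ∧ Function.Surjective f ∧
      Module.Projective A ↥(LinearMap.ker f)

/-- `Ext¹_A(M,N) = 0`, expressed by the splitting of every short exact sequence
`0 → N → E → M → 0`. -/
def Ext1Zero (A : Type) [Ring A] (M N : Type) [AddCommGroup M] [Module A M]
    [AddCommGroup N] [Module A N] : Prop :=
  ∀ (E : ModuleCat.{0} A) (i : N →ₗ[A] ↥E) (p : ↥E →ₗ[A] M),
    Function.Injective i → Function.Surjective p → LinearMap.range i = LinearMap.ker p →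
    ∃ s : M →ₗ[A] ↥E, p.comp s = LinearMap.id

/-- `X ∈ add T` : `X` is a direct summand of a finite direct sum of copies of `T`. -/
def InAdd (A : Type) [Ring A] (T X : Type) [AddCommGroup T] [Module A T]
    [AddCommGroup X] [Module A X] : Prop :=
  ∃ (k : ℕ) (f : X →ₗ[A] (Fin k → T)) (g : (Fin k → T) →ₗ[A] X),
    g.comp f = LinearMap.id

/-- `T` is a (finitely generated) tilting right `R`-module: projective dimension at most one,
no self-extensions, and there is a short exact sequence `0 → R → T₀ → T₁ → 0` with
`T₀, T₁ ∈ add T`. -/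
def IsTiltingRight (R : Type) [Ring R] (T : Type) [AddCommGroup T] [Module Rᵐᵒᵖ T] : Prop :=
  Module.Finite Rᵐᵒᵖ T ∧ PdLeOne Rᵐᵒᵖ T ∧ Ext1Zero Rᵐᵒᵖ T T ∧
    ∃ (T₀ T₁ : ModuleCat.{0} Rᵐᵒᵖ) (f : R →ₗ[Rᵐᵒᵖ] ↥T₀) (g : ↥T₀ →ₗ[Rᵐᵒᵖ] ↥T₁),
      InAdd Rᵐᵒᵖ T ↥T₀ ∧ InAdd Rᵐᵒᵖ T ↥T₁ ∧
        Function.Injective f ∧ Function.Surjective g ∧ LinearMap.range f = LinearMap.ker g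

/-- `T` is basic: it is an (internal) direct sum of pairwise non-isomorphic indecomposable
submodules. -/
def IsBasicMod (A : Type) [Ring A] (T : Type) [AddCommGroup T] [Module A T] : Prop :=
  ∃ (k : ℕ) (N : Fin k → Submodule A T),
    DirectSum.IsInternal N ∧ (∀ a, IsIndecomposableMod A ↥(N a)) ∧
      ∀ a b, a ≠ b → IsEmpty (↥(N a) ≃ₗ[A] ↥(N b))

/-- The setoid identifying isomorphic modules (among those with property `P`). -/
def isoSetoid (A : Type) [Ring A] (P : ModuleCat.{0} A → Prop) :
    Setoid {M : ModuleCat.{0} A // P M} where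
  r M N := Nonempty (↥M.1 ≃ₗ[A] ↥N.1)
  iseqv := ⟨fun M => ⟨LinearEquiv.refl A ↥M.1⟩, fun ⟨e⟩ => ⟨e.symm⟩,
    fun ⟨e⟩ ⟨f⟩ => ⟨e.trans f⟩⟩

/-- The data exhibiting a ring `R` as a basic left Harada algebra:
a complete set `{e i j}` of orthogonal primitive idempotents with pairwise non-isomorphic
right ideals `(e i j)R` (`R` is basic), such that each `(e i 0)R` is an injective right
module, and `(e i j)R ≅ rad ((e i (j-1))R)` for `j ≥ 1`.  (Indices are shifted by one from
the paper: the paper's `e_{ij}` is `e i (j-1)` here.) -/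
structure HaradaData (R : Type) [Ring R] : Type where
  m : ℕ
  hm : 0 < m
  n : Fin m → ℕ
  hn : ∀ i, 0 < n i
  e : (i : Fin m) → Fin (n i) → R
  idem : ∀ i j, IsIdempotentElem (e i j)
  orth : ∀ p q : Σ i : Fin m, Fin (n i), p ≠ q → e p.1 p.2 * e q.1 q.2 = 0
  sum_eq_one : ∑ p : Σ i : Fin m, Fin (n i), e p.1 p.2 = 1
  indec : ∀ i j, IsIndecomposableMod Rᵐᵒᵖ ↥(rightIdeal R (e i j))
  basic : ∀ p q : Σ i : Fin m, Fin (n i), p ≠ q →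
    IsEmpty (↥(rightIdeal R (e p.1 p.2)) ≃ₗ[Rᵐᵒᵖ] ↥(rightIdeal R (e q.1 q.2)))
  inj : ∀ i, Module.Injective Rᵐᵒᵖ ↥(rightIdeal R (e i ⟨0, hn i⟩))
  rad_iso : ∀ (i : Fin m) (j : Fin (n i)), 0 < j.val →
    Nonempty (↥(rightIdeal R (e i j)) ≃ₗ[Rᵐᵒᵖ]
      ↥(radSub (rightIdeal R (e i ⟨j.val - 1, Nat.lt_of_le_of_lt (Nat.sub_le j.val 1) j.isLt⟩))))

variable {R : Type} [Ring R]

/-- `H.P i j = rad^j ((e i 0)R)`; this is the paper's `P_{i,j+1} = rad^j (e_{i1}R)`,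
a submodule of `R`. -/
def HaradaData.P (H : HaradaData R) (i : Fin H.m) (j : Fin (H.n i)) : Submodule Rᵐᵒᵖ R :=
  radSub^[j.val] (rightIdeal R (H.e i ⟨0, H.hn i⟩))

/-- The quotient module `P_{ik}/P_{il}` (for `l ≥ k` we have `H.P i l ≤ H.P i k`). -/
abbrev HaradaData.Quot (H : HaradaData R) (i : Fin H.m) (k l : Fin (H.n i)) : Type :=
  ↥(H.P i k) ⧸ Submodule.comap (H.P i k).subtype (H.P i l)

/-- The last index (the paper's `n_i`) in `Fin (H.n i)`. -/
def HaradaData.last (H : HaradaData R) (i : Fin H.m) : Fin (H.n i) :=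
  ⟨H.n i - 1, Nat.sub_lt (H.hn i) one_pos⟩

/-- The right ideal `I = ⊕_{i,j} rad^{n_i - j + 1}(e_{ij}R)` of the paper. -/
def HaradaData.I (H : HaradaData R) : Submodule Rᵐᵒᵖ R :=
  ⨆ p : Σ i : Fin H.m, Fin (H.n i),
    radSub^[H.n p.1 - p.2.val] (rightIdeal R (H.e p.1 p.2))

/-- The submodule `T·I` of a right module `T`, for `I` a right ideal of `R`. -/
def smulSub (I : Submodule Rᵐᵒᵖ R) (T : Type) [AddCommGroup T] [Module Rᵐᵒᵖ T] :
    Submodule Rᵐᵒᵖ T :=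
  Submodule.span Rᵐᵒᵖ {x : T | ∃ (t : T) (r : R), r ∈ I ∧ x = op r • t}

/-- Restriction of scalars along `π : R →+* S`, turning a right `S`-module into a right
`R`-module (type synonym). -/
@[nolint unusedArguments]
def RestrictRight {R S : Type} [Ring R] [Ring S] (_ : R →+* S) (N : Type) [AddCommGroup N]
    [Module Sᵐᵒᵖ N] : Type := N

instance {R S : Type} [Ring R] [Ring S] (π : R →+* S) (N : Type) [AddCommGroup N]
    [Module Sᵐᵒᵖ N] : AddCommGroup (RestrictRight π N) := inferInstanceAs (AddCommGroup N)

instance {R S : Type} [Ring R] [Ring S] (π : R →+* S) (N : Type) [AddCommGroup N]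
    [Module Sᵐᵒᵖ N] : Module Rᵐᵒᵖ (RestrictRight π N) := Module.compHom N (RingHom.op π)

section Helpers

/-! ### General facts on radicals -/

theorem radSub_le {A M : Type} [Ring A] [AddCommGroup M] [Module A M] (N : Submodule A M) :
    radSub N ≤ N := Submodule.map_subtype_le _ _

theorem radSub_mono_map {A M M' : Type} [Ring A] [AddCommGroup M] [Module A M]
    [AddCommGroup M'] [Module A M'] (f : M →ₗ[A] M') (N : Submodule A M) (N' : Submodule A M')
    (h : N ≤ N'.comap f) : radSub N ≤ (radSub N').comap f := by
  rintro _ ⟨x, hx, rfl⟩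
  let g : ↥N →ₗ[A] ↥N' := f.restrict h
  have := Module.le_comap_jacobson g (show x ∈ Module.jacobson A ↥N from hx)
  exact ⟨g x, this, rfl⟩

theorem radSub_iter_map {A M M' : Type} [Ring A] [AddCommGroup M] [Module A M]
    [AddCommGroup M'] [Module A M'] (f : M →ₗ[A] M') (N : Submodule A M) (N' : Submodule A M')
    (h : N ≤ N'.comap f) (t : ℕ) : radSub^[t] N ≤ (radSub^[t] N').comap f := by
  induction t with
  | zero => exact h
  | succ t ih =>
    rw [Function.iterate_succ_apply', Function.iterate_succ_apply']
    exact radSub_mono_map f _ _ ih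

theorem radSub_iter_anti {A M : Type} [Ring A] [AddCommGroup M] [Module A M]
    (N : Submodule A M) {s t : ℕ} (h : s ≤ t) : radSub^[t] N ≤ radSub^[s] N := by
  induction h with
  | refl => exact le_rfl
  | step _ ih =>
    rw [Function.iterate_succ_apply']
    exact (radSub_le _).trans ih

/-- An isomorphism of submodules induces one on radicals. -/
theorem radSub_equiv {A M M' : Type} [Ring A] [AddCommGroup M] [Module A M]
    [AddCommGroup M'] [Module A M'] (N : Submodule A M) (N' : Submodule A M')
    (e : ↥N ≃ₗ[A] ↥N') : Nonempty (↥(radSub N) ≃ₗ[A] ↥(radSub N')) := by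
  have h : Submodule.map (e : ↥N →ₗ[A] ↥N') (Module.jacobson A ↥N) = Module.jacobson A ↥N' :=
    Module.map_jacobson_of_bijective e.bijective
  have e1 : ↥(Module.jacobson A ↥N) ≃ₗ[A] ↥(radSub N) :=
    Submodule.equivMapOfInjective N.subtype N.injective_subtype _
  have e2 : ↥(Module.jacobson A ↥N') ≃ₗ[A] ↥(radSub N') :=
    Submodule.equivMapOfInjective N'.subtype N'.injective_subtype _
  have e3 : ↥(Module.jacobson A ↥N) ≃ₗ[A] ↥(Module.jacobson A ↥N') :=
    (e.submoduleMap _).trans (LinearEquiv.ofEq _ _ h)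
  exact ⟨e1.symm.trans (e3.trans e2)⟩

theorem not_le_radSub {A M : Type} [Ring A] [AddCommGroup M] [Module A M]
    (N : Submodule A M) [Nontrivial ↥N] [Module.Finite A ↥N] : ¬ N ≤ radSub N := by
  intro h
  have h1 := Module.jacobson_lt_top A ↥N
  apply h1.ne
  rw [eq_top_iff]
  intro x _
  obtain ⟨y, hy, hxy⟩ := h x.2
  have : y = x := Subtype.ext hxy
  exact this ▸ hy

/-- Fitting. -/
theorem fitting {A M : Type} [Ring A] [AddCommGroup M] [Module A M] [IsArtinian A M]
    [IsNoetherian A M] (hM : IsIndecomposableMod A M) (f : Module.End A M) :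
    IsUnit f ∨ IsNilpotent f := by
  obtain ⟨n, hn⟩ := Filter.eventually_atTop.mp f.eventually_isCompl_ker_pow_range_pow
  have h := hn (n+1) (Nat.le_succ n)
  rcases hM.2 _ _ h with h0 | h0
  · left
    have hinj : Function.Injective (f ^ (n+1)) := LinearMap.ker_eq_bot.mp h0
    have hsurj := IsArtinian.surjective_of_injective_endomorphism _ hinj
    have : IsUnit (f ^ (n+1)) := (Module.End.isUnit_iff _).mpr ⟨hinj, hsurj⟩
    exact (isUnit_pow_succ_iff).mp this
  · right
    exact ⟨n+1, LinearMap.range_eq_bot.mp h0⟩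

/-- An indecomposable projective module of finite length is local. -/
theorem local_of_indec {A M : Type} [Ring A] [AddCommGroup M] [Module A M] [IsArtinian A M]
    [IsNoetherian A M] [Module.Projective A M] (hM : IsIndecomposableMod A M)
    (N : Submodule A M) (hN : N ≠ ⊤) : N ≤ Module.jacobson A M := by
  refine le_sInf fun Q hQ => ?_
  by_contra hNQ
  have hsup : N ⊔ Q = ⊤ := hQ.2 _ (lt_of_le_of_ne le_sup_right fun h => hNQ (h ▸ le_sup_left))
  let φ : (↥N × ↥Q) →ₗ[A] M := N.subtype.coprod Q.subtype
  have hφ : Function.Surjective φ := by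
    rw [← LinearMap.range_eq_top]
    simp [φ, LinearMap.range_coprod, hsup]
  obtain ⟨s, hs⟩ := Module.projective_lifting_property φ LinearMap.id hφ
  let a : Module.End A M := N.subtype ∘ₗ LinearMap.fst A _ _ ∘ₗ s
  let b : Module.End A M := Q.subtype ∘ₗ LinearMap.snd A _ _ ∘ₗ s
  have hab : a + b = 1 := by
    ext x
    have := LinearMap.congr_fun hs x
    simpa [φ, a, b] using this
  have hbnot : ¬ IsUnit b := by
    intro hb
    apply hQ.1
    rw [eq_top_iff]
    intro x _
    obtain ⟨y, rfl⟩ := ((Module.End.isUnit_iff _).mp hb).2 x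
    exact (s y).2.2
  rcases fitting hM a with ha | ha
  · apply hN
    rw [eq_top_iff]
    intro x _
    obtain ⟨y, rfl⟩ := ((Module.End.isUnit_iff _).mp ha).2 x
    exact (s y).1.2
  · apply hbnot
    have : b = 1 - a := by rw [← hab]; simp
    rw [this]
    exact ha.isUnit_one_sub

theorem local_sub {A M : Type} [Ring A] [AddCommGroup M] [Module A M] [IsArtinian A M]
    [IsNoetherian A M] (P N : Submodule A M) [Module.Projective A ↥P]
    (hP : IsIndecomposableMod A ↥P) (hNP : N ≤ P) : N = P ∨ N ≤ radSub P := by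
  by_cases h : Submodule.comap P.subtype N = ⊤
  · left
    exact le_antisymm hNP (Submodule.comap_subtype_eq_top.mp h)
  · right
    have := local_of_indec hP _ h
    intro x hx
    exact ⟨⟨x, hNP hx⟩, this hx, rfl⟩

theorem indec_of_equiv {A M M' : Type} [Ring A] [AddCommGroup M] [Module A M]
    [AddCommGroup M'] [Module A M'] (e : M ≃ₗ[A] M') (h : IsIndecomposableMod A M) :
    IsIndecomposableMod A M' := by
  obtain ⟨h1, h2⟩ := h
  refine ⟨e.symm.toEquiv.nontrivial, fun N N' hN => ?_⟩
  let o := Submodule.orderIsoMapComap e.symm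
  rcases h2 (o N) (o N') (o.isCompl hN) with h | h
  · left; exact (map_eq_bot_iff o).mp h
  · right; exact (map_eq_bot_iff o).mp h

/-- A surjection from an indecomposable onto a nonzero projective is an isomorphism. -/
theorem inj_of_surj {A M M' : Type} [Ring A] [AddCommGroup M] [Module A M]
    [AddCommGroup M'] [Module A M'] (hM : IsIndecomposableMod A M) [Module.Projective A M']
    [Nontrivial M'] (f : M →ₗ[A] M') (hf : Function.Surjective f) : Function.Injective f := by
  obtain ⟨s, hs⟩ := Module.projective_lifting_property f LinearMap.id hf
  have hc : IsCompl (LinearMap.ker f) (LinearMap.range s) := by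
    constructor
    · rw [Submodule.disjoint_def]
      rintro _ hx ⟨y, rfl⟩
      have h1 : f (s y) = y := LinearMap.congr_fun hs y
      have h2 : f (s y) = 0 := hx
      rw [← h1, h2, map_zero]
    · rw [codisjoint_iff, eq_top_iff]
      intro x _
      refine Submodule.mem_sup.mpr ⟨x - s (f x), ?_, s (f x), ⟨_, rfl⟩, by simp⟩
      have h1 : f (s (f x)) = f x := LinearMap.congr_fun hs (f x)
      simp [h1]
  rcases hM.2 _ _ hc with h | h
  · exact LinearMap.ker_eq_bot.mp h
  · exfalso
    obtain ⟨y, hy⟩ := exists_ne (0 : M')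
    apply hy
    have h1 : f (s y) = y := LinearMap.congr_fun hs y
    have h2 : s = 0 := LinearMap.range_eq_bot.mp h
    rw [← h1, h2]; simp

/-! ### Extensions -/

theorem ext1_of_extend {A Q N : Type} [Ring A] [AddCommGroup Q] [Module A Q]
    [AddCommGroup N] [Module A N] [Module.Projective A Q] (L : Submodule A Q)
    (h : ∀ f : ↥L →ₗ[A] N, ∃ F : Q →ₗ[A] N, ∀ x : ↥L, F x = f x) :
    Ext1Zero A (Q ⧸ L) N := by
  intro E i p hi hp hip
  obtain ⟨φ, hφ⟩ := Module.projective_lifting_property p L.mkQ hp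
  have hφ' : ∀ q, p (φ q) = L.mkQ q := LinearMap.congr_fun hφ
  let e := LinearEquiv.ofInjective i hi
  have hr : ∀ x : ↥L, φ x ∈ LinearMap.range i := by
    intro x
    rw [hip, LinearMap.mem_ker, hφ']
    simp
  let f : ↥L →ₗ[A] N := e.symm.toLinearMap ∘ₗ (φ ∘ₗ L.subtype).codRestrict _ hr
  have hf : ∀ x : ↥L, i (f x) = φ x := by
    intro x
    have : e (f x) = (φ ∘ₗ L.subtype).codRestrict _ hr x := e.apply_symm_apply _
    exact congrArg Subtype.val this
  obtain ⟨F, hF⟩ := h f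
  refine ⟨L.liftQ (φ - i ∘ₗ F) ?_, ?_⟩
  · intro x hx
    have h1 := hF ⟨x, hx⟩
    have h2 := hf ⟨x, hx⟩
    simp only at h1 h2
    simp [h1, h2]
  · apply Submodule.linearMap_qext
    ext x
    have : p (i (F x)) = 0 := by
      have : i (F x) ∈ LinearMap.ker p := hip ▸ ⟨_, rfl⟩
      exact this
    simpa [this] using hφ' x

theorem pushout_exists {A Q N : Type} [Ring A] [AddCommGroup Q] [Module A Q]
    [AddCommGroup N] [Module A N] (L : Submodule A Q) (f : ↥L →ₗ[A] N) :
    ∃ (E : ModuleCat.{0} A) (i : N →ₗ[A] ↥E) (q : Q →ₗ[A] ↥E) (p : ↥E →ₗ[A] (Q ⧸ L)),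
      Function.Injective i ∧ Function.Surjective p ∧ LinearMap.range i = LinearMap.ker p ∧
      (∀ y, p (q y) = L.mkQ y) ∧ (∀ x : ↥L, q x = i (f x)) ∧ ∀ z, ∃ n y, z = i n + q y := by
  let G : Submodule A (N × Q) := LinearMap.range (f.prod (-L.subtype))
  let i : N →ₗ[A] ((N × Q) ⧸ G) := G.mkQ ∘ₗ LinearMap.inl A N Q
  let q : Q →ₗ[A] ((N × Q) ⧸ G) := G.mkQ ∘ₗ LinearMap.inr A N Q
  let p : ((N × Q) ⧸ G) →ₗ[A] (Q ⧸ L) := G.liftQ (L.mkQ ∘ₗ LinearMap.snd A N Q) (by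
    rintro _ ⟨x, rfl⟩
    simp)
  have hpq : ∀ y, p (q y) = L.mkQ y := fun y => by simp [p, q]
  have hpi : ∀ y, p (i y) = 0 := fun y => by simp [p, i]
  have hz : ∀ z, ∃ n y, z = i n + q y := by
    intro z
    obtain ⟨⟨n, y⟩, rfl⟩ := G.mkQ_surjective z
    refine ⟨n, y, ?_⟩
    simp only [i, q, LinearMap.comp_apply, ← map_add]
    simp
  have hqf : ∀ x : ↥L, q x = i (f x) := by
    intro x
    rw [← sub_eq_zero]
    simp only [i, q, LinearMap.comp_apply, ← map_sub]
    refine (Submodule.Quotient.mk_eq_zero _).mpr ⟨-x, ?_⟩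
    simp
  refine ⟨ModuleCat.of A ((N × Q) ⧸ G), i, q, p, ?_, ?_, ?_, hpq, hqf, hz⟩
  · rw [← LinearMap.ker_eq_bot, eq_bot_iff]
    intro n hn
    obtain ⟨x, hx⟩ := (Submodule.Quotient.mk_eq_zero _).mp (show G.mkQ (n, 0) = 0 from hn)
    have h1 : f x = n := congrArg Prod.fst hx
    have h2 : -(x : Q) = 0 := congrArg Prod.snd hx
    have h3 : x = 0 := Subtype.ext (neg_eq_zero.mp h2)
    rw [Submodule.mem_bot, ← h1, h3, map_zero]
  · intro y
    obtain ⟨y, rfl⟩ := L.mkQ_surjective y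
    exact ⟨q y, hpq y⟩
  · apply le_antisymm
    · rintro _ ⟨n, rfl⟩
      exact hpi n
    · intro z h
      obtain ⟨n, y, rfl⟩ := hz z
      have h' : p (i n + q y) = 0 := h
      rw [map_add, hpi, hpq, zero_add] at h'
      have hy : y ∈ L := (Submodule.Quotient.mk_eq_zero _).mp h'
      exact ⟨n + f ⟨y, hy⟩, by rw [map_add, ← hqf]⟩

theorem extend_of_split {A Q N E : Type} [Ring A] [AddCommGroup Q] [Module A Q]
    [AddCommGroup N] [Module A N] [AddCommGroup E] [Module A E]
    (L : Submodule A Q) (f : ↥L →ₗ[A] N)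
    (i : N →ₗ[A] E) (q : Q →ₗ[A] E) (p : E →ₗ[A] (Q ⧸ L))
    (hi : Function.Injective i) (hip : LinearMap.range i = LinearMap.ker p)
    (hpq : ∀ y, p (q y) = L.mkQ y) (hqf : ∀ x : ↥L, q x = i (f x))
    (s : (Q ⧸ L) →ₗ[A] E) (hs : ∀ y, p (s y) = y) :
    ∃ F : Q →ₗ[A] N, ∀ x : ↥L, F x = f x := by
  let e := LinearEquiv.ofInjective i hi
  have hr : ∀ y, (q - s ∘ₗ L.mkQ) y ∈ LinearMap.range i := by
    intro y
    rw [hip, LinearMap.mem_ker, LinearMap.sub_apply, map_sub, hpq, LinearMap.comp_apply, hs,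
      sub_self]
  refine ⟨e.symm.toLinearMap ∘ₗ (q - s ∘ₗ L.mkQ).codRestrict _ hr, fun x => ?_⟩
  rw [LinearMap.comp_apply]
  apply (LinearEquiv.symm_apply_eq e).mpr
  apply Subtype.ext
  have h0 : L.mkQ (x : Q) = 0 := (Submodule.Quotient.mk_eq_zero _).mpr x.2
  change q x - s (L.mkQ x) = i (f x)
  rw [h0, map_zero, sub_zero, hqf]

theorem extend_of_ext1 {A Q N : Type} [Ring A] [AddCommGroup Q] [Module A Q]
    [AddCommGroup N] [Module A N] (L : Submodule A Q)
    (h : Ext1Zero A (Q ⧸ L) N) (f : ↥L →ₗ[A] N) : ∃ F : Q →ₗ[A] N, ∀ x : ↥L, F x = f x := by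
  obtain ⟨E, i, q, p, hi, hp, hip, hpq, hqf, -⟩ := pushout_exists L f
  obtain ⟨s, hs⟩ := h E i p hi hp hip
  exact extend_of_split L f i q p hi hip hpq hqf s (LinearMap.congr_fun hs)

/-! ### Change of rings -/

theorem restrict_smul {R S : Type} [Ring R] [Ring S] (π : R →+* S) {N : Type} [AddCommGroup N]
    [Module Sᵐᵒᵖ N] (r : R) (x : N) :
    (op r • (show RestrictRight π N from x) : RestrictRight π N) = (op (π r) • x : N) := rfl

/-- An `R`-linear map between restricted modules is `S`-linear. -/
def upgrade {R S : Type} [Ring R] [Ring S] (π : R →+* S) (hsurj : Function.Surjective π)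
    {M N : Type} [AddCommGroup M] [Module Sᵐᵒᵖ M] [AddCommGroup N] [Module Sᵐᵒᵖ N]
    (f : RestrictRight π M →ₗ[Rᵐᵒᵖ] RestrictRight π N) : M →ₗ[Sᵐᵒᵖ] N where
  toFun := f
  map_add' := f.map_add
  map_smul' s x := by
    obtain ⟨r, hr⟩ := hsurj s.unop
    have : s = op (π r) := by rw [hr, op_unop]
    subst this
    exact f.map_smul (op r) x

def downgrade {R S : Type} [Ring R] [Ring S] (π : R →+* S)
    {M N : Type} [AddCommGroup M] [Module Sᵐᵒᵖ M] [AddCommGroup N] [Module Sᵐᵒᵖ N]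
    (f : M →ₗ[Sᵐᵒᵖ] N) : RestrictRight π M →ₗ[Rᵐᵒᵖ] RestrictRight π N where
  toFun := f
  map_add' := f.map_add
  map_smul' r x := f.map_smul (op (π r.unop)) x

theorem ext1_equiv {A M M' N N' : Type} [Ring A] [AddCommGroup M] [Module A M]
    [AddCommGroup M'] [Module A M'] [AddCommGroup N] [Module A N] [AddCommGroup N'] [Module A N']
    (e : M ≃ₗ[A] M') (e' : N ≃ₗ[A] N') (h : Ext1Zero A M' N') : Ext1Zero A M N := by
  intro E i p hi hp hip
  obtain ⟨s, hs⟩ := h E (i ∘ₗ e'.symm.toLinearMap) (e.toLinearMap ∘ₗ p)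
    (hi.comp e'.symm.injective) (e.surjective.comp hp) (by
      rw [LinearEquiv.ker_comp, LinearMap.range_comp_of_range_eq_top _ e'.symm.range]
      exact hip)
  refine ⟨s ∘ₗ e.toLinearMap, ?_⟩
  ext x
  have := LinearMap.congr_fun hs (e x)
  exact e.injective this

theorem ext1_restrict {R S : Type} [Ring R] [Ring S] (π : R →+* S)
    (hsurj : Function.Surjective π)
    {M N : Type} [AddCommGroup M] [Module Sᵐᵒᵖ M] [AddCommGroup N] [Module Sᵐᵒᵖ N]
    (h : Ext1Zero Rᵐᵒᵖ (RestrictRight π M) (RestrictRight π N)) : Ext1Zero Sᵐᵒᵖ M N := by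
  intro E i p hi hp hip
  obtain ⟨s, hs⟩ := h (ModuleCat.of Rᵐᵒᵖ (RestrictRight π ↥E)) (downgrade (N := ↥E) π i)
    (downgrade (M := ↥E) π p) hi hp (by
      ext x
      exact Submodule.ext_iff.mp hip x)
  refine ⟨upgrade π hsurj s, ?_⟩
  ext x
  exact LinearMap.congr_fun hs x

theorem exists_lift_module {R S : Type} [Ring R] [Ring S] (π : R →+* S)
    (hsurj : Function.Surjective π) (M : Type) [AddCommGroup M] [Module Rᵐᵒᵖ M]
    (hM : ∀ (r : R) (x : M), π r = 0 → op r • x = 0) :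
    ∃ E : ModuleCat.{0} Sᵐᵒᵖ, Nonempty (RestrictRight π ↥E ≃ₗ[Rᵐᵒᵖ] M) := by
  let g : S → R := Function.surjInv hsurj
  have hg : ∀ s, π (g s) = s := Function.surjInv_eq hsurj
  have key : ∀ (r r' : R) (x : M), π r = π r' → op r • x = op r' • x := by
    intro r r' x h
    rw [← sub_eq_zero, ← sub_smul, ← op_sub]
    exact hM _ _ (by rw [map_sub, h, sub_self])
  let _ : Module Sᵐᵒᵖ M :=
    { smul := fun s x => op (g s.unop) • x
      one_smul := fun x => by
        change op (g 1) • x = x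
        rw [key (g 1) 1 x (by rw [hg, map_one]), op_one, one_smul]
      mul_smul := fun s t x => by
        change op (g (t.unop * s.unop)) • x = op (g s.unop) • op (g t.unop) • x
        rw [smul_smul, ← op_mul]
        exact key _ _ _ (by rw [map_mul, hg, hg, hg])
      smul_zero := fun s => smul_zero (op (g s.unop))
      smul_add := fun s x y => smul_add (op (g s.unop)) x y
      add_smul := fun s t x => by
        change op (g (s.unop + t.unop)) • x = op (g s.unop) • x + op (g t.unop) • x
        rw [← add_smul, ← op_add]
        exact key _ _ _ (by rw [map_add, hg, hg, hg])
      zero_smul := fun x => hM _ _ (hg 0) }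
  refine ⟨ModuleCat.of Sᵐᵒᵖ M, ⟨?_⟩⟩
  exact
    { toFun := fun x => x
      invFun := fun x => x
      map_add' := fun _ _ => rfl
      map_smul' := fun r x => key (g (π r.unop)) r.unop x (hg _)
      left_inv := fun _ => rfl
      right_inv := fun _ => rfl }

theorem extend_of_ext1_restrict {R S : Type} [Ring R] [Ring S] (π : R →+* S)
    (hsurj : Function.Surjective π) {Q N X Y : Type} [AddCommGroup Q] [Module Rᵐᵒᵖ Q]
    [AddCommGroup N] [Module Rᵐᵒᵖ N] [AddCommGroup X] [Module Sᵐᵒᵖ X]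
    [AddCommGroup Y] [Module Sᵐᵒᵖ Y] (L : Submodule Rᵐᵒᵖ Q)
    (eX : RestrictRight π X ≃ₗ[Rᵐᵒᵖ] (Q ⧸ L)) (eY : RestrictRight π Y ≃ₗ[Rᵐᵒᵖ] N)
    (h : Ext1Zero Sᵐᵒᵖ X Y) (f : ↥L →ₗ[Rᵐᵒᵖ] N)
    (hN : ∀ (r : R) (x : N), π r = 0 → op r • x = 0)
    (hQ : ∀ (r : R) (x : Q), π r = 0 → ∃ y : ↥L, op r • x = y ∧ f y = 0) :
    ∃ F : Q →ₗ[Rᵐᵒᵖ] N, ∀ x : ↥L, F x = f x := by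
  obtain ⟨E, i, q, p, hi, hp, hip, hpq, hqf, hz⟩ := pushout_exists L f
  obtain ⟨E', ⟨ε⟩⟩ := exists_lift_module π hsurj ↥E (by
    intro r x hr
    obtain ⟨n, y, rfl⟩ := hz x
    obtain ⟨w, hw, hw0⟩ := hQ r y hr
    rw [smul_add, ← map_smul, ← map_smul, hN r n hr, hw, hqf, hw0]
    simp)
  let i' : RestrictRight π Y →ₗ[Rᵐᵒᵖ] RestrictRight π ↥E' :=
    ε.symm.toLinearMap ∘ₗ i ∘ₗ eY.toLinearMap
  let p' : RestrictRight π ↥E' →ₗ[Rᵐᵒᵖ] RestrictRight π X :=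
    eX.symm.toLinearMap ∘ₗ p ∘ₗ ε.toLinearMap
  obtain ⟨s, hs⟩ := h E' (upgrade π hsurj i') (upgrade π hsurj p')
    (ε.symm.injective.comp (hi.comp eY.injective))
    (eX.symm.surjective.comp (hp.comp ε.surjective)) (by
      ext z
      have h1 := Submodule.ext_iff.mp hip (ε z)
      constructor
      · rintro ⟨y, rfl⟩
        have : p (i (eY y)) = 0 := (Submodule.ext_iff.mp hip _).mp ⟨_, rfl⟩
        change eX.symm (p (ε (ε.symm (i (eY y))))) = 0
        rw [ε.apply_symm_apply, this, map_zero]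
      · intro hzz
        have h2 : eX.symm (p (ε z)) = 0 := hzz
        have h3 : p (ε z) = 0 := by simpa using h2
        obtain ⟨n, hn⟩ := h1.mpr h3
        refine ⟨eY.symm n, ?_⟩
        change ε.symm (i (eY (eY.symm n))) = z
        rw [eY.apply_symm_apply, hn]
        exact ε.symm_apply_apply z)
  refine extend_of_split L f i q p hi hip hpq hqf
    (ε.toLinearMap ∘ₗ downgrade π s ∘ₗ eX.symm.toLinearMap) (fun y => ?_)
  have h1 : eX.symm (p (ε (s (eX.symm y)))) = eX.symm y := LinearMap.congr_fun hs (eX.symm y)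
  exact eX.symm.injective h1

end Helpers

section Harada

/-- `Pn H i t = rad^t (e_{i0} R)` for an arbitrary natural number `t`. -/
def Pn (H : HaradaData R) (i : Fin H.m) (t : ℕ) : Submodule Rᵐᵒᵖ R :=
  radSub^[t] (rightIdeal R (H.e i ⟨0, H.hn i⟩))

theorem Pn_succ (H : HaradaData R) (i : Fin H.m) (t : ℕ) :
    Pn H i (t + 1) = radSub (Pn H i t) := Function.iterate_succ_apply' _ _ _

theorem Pn_anti (H : HaradaData R) (i : Fin H.m) {s t : ℕ} (h : s ≤ t) :
    Pn H i t ≤ Pn H i s := radSub_iter_anti _ h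

theorem Pn_last (H : HaradaData R) (i : Fin H.m) :
    radSub (H.P i (H.last i)) = Pn H i (H.n i) := by
  have h : H.n i - 1 + 1 = H.n i := Nat.succ_pred_eq_of_pos (H.hn i)
  change radSub (Pn H i (H.n i - 1)) = _
  rw [← Pn_succ, h]

theorem mem_rightIdeal {e : R} (he : IsIdempotentElem e) (x : R) :
    x ∈ rightIdeal R e ↔ e * x = x := by
  rw [rightIdeal, Submodule.mem_span_singleton]
  constructor
  · rintro ⟨a, rfl⟩
    change e * (e * a.unop) = e * a.unop
    rw [← mul_assoc, he]
  · intro h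
    exact ⟨op x, h⟩

/-- Left multiplication as a map of right modules. -/
def lmul (x : R) : R →ₗ[Rᵐᵒᵖ] R where
  toFun y := x * y
  map_add' := mul_add x
  map_smul' r y := (mul_assoc x y r.unop).symm

theorem proj_self : Module.Projective Rᵐᵒᵖ R :=
  Module.Projective.of_equiv'
    ({ toFun := fun x => x.unop
       invFun := fun x => op x
       map_add' := fun _ _ => rfl
       map_smul' := fun _ _ => rfl
       left_inv := fun _ => rfl
       right_inv := fun _ => rfl } : Rᵐᵒᵖ ≃ₗ[Rᵐᵒᵖ] R)

theorem proj_rightIdeal {e : R} (he : IsIdempotentElem e) :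
    Module.Projective Rᵐᵒᵖ ↥(rightIdeal R e) := by
  have := proj_self (R := R)
  refine Module.Projective.of_split (rightIdeal R e).subtype
    ((lmul e).codRestrict (rightIdeal R e) fun x => ?_) ?_
  · rw [mem_rightIdeal he]
    change e * (e * x) = e * x
    rw [← mul_assoc, he]
  · ext x
    exact (mem_rightIdeal he x.1).mp x.2

theorem Pn_equiv (H : HaradaData R) (i : Fin H.m) (t : ℕ) (ht : t < H.n i) :
    Nonempty (↥(rightIdeal R (H.e i ⟨t, ht⟩)) ≃ₗ[Rᵐᵒᵖ] ↥(Pn H i t)) := by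
  induction t with
  | zero => exact ⟨LinearEquiv.refl _ _⟩
  | succ t ih =>
    obtain ⟨e1⟩ := H.rad_iso i ⟨t + 1, ht⟩ (Nat.succ_pos t)
    obtain ⟨e2⟩ := ih (Nat.lt_of_succ_lt ht)
    obtain ⟨e3⟩ := radSub_equiv _ _ e2
    rw [Pn_succ]
    exact ⟨e1.trans e3⟩

theorem Pn_proj (H : HaradaData R) (i : Fin H.m) (t : ℕ) (ht : t < H.n i) :
    Module.Projective Rᵐᵒᵖ ↥(Pn H i t) := by
  obtain ⟨e⟩ := Pn_equiv H i t ht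
  have := proj_rightIdeal (H.idem i ⟨t, ht⟩)
  exact Module.Projective.of_equiv' e

theorem Pn_indec (H : HaradaData R) (i : Fin H.m) (t : ℕ) (ht : t < H.n i) :
    IsIndecomposableMod Rᵐᵒᵖ ↥(Pn H i t) := by
  obtain ⟨e⟩ := Pn_equiv H i t ht
  exact indec_of_equiv e (H.indec i _)

theorem Pn_not_le [IsNoetherian Rᵐᵒᵖ R] (H : HaradaData R) (i : Fin H.m) {s t : ℕ}
    (hst : s < t) (hs : s < H.n i) : ¬ Pn H i s ≤ Pn H i t := by
  intro h
  have := (Pn_indec H i s hs).1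
  apply not_le_radSub (Pn H i s)
  rw [← Pn_succ]
  exact h.trans (Pn_anti H i hst)

theorem chain [IsArtinian Rᵐᵒᵖ R] [IsNoetherian Rᵐᵒᵖ R] (H : HaradaData R) (i : Fin H.m)
    (N : Submodule Rᵐᵒᵖ R) (hN : N ≤ Pn H i 0) (t : ℕ) (ht : t ≤ H.n i) :
    N ≤ Pn H i t ∨ ∃ s, s < H.n i ∧ N = Pn H i s := by
  induction t with
  | zero => exact Or.inl hN
  | succ t ih =>
    rcases ih (Nat.le_of_succ_le ht) with h | h
    · have := Pn_proj H i t ht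
      rcases local_sub _ N (Pn_indec H i t ht) h with h' | h'
      · exact Or.inr ⟨t, ht, h'⟩
      · left
        rw [Pn_succ]
        exact h'
    · exact Or.inr h

theorem extend_inj (H : HaradaData R) (i : Fin H.m) (A : Submodule Rᵐᵒᵖ R)
    (f : ↥A →ₗ[Rᵐᵒᵖ] R) (hf : ∀ x, f x ∈ Pn H i 0) :
    ∃ g : R →ₗ[Rᵐᵒᵖ] R, (∀ x, g x ∈ Pn H i 0) ∧ ∀ x : ↥A, g x = f x := by
  obtain ⟨g, hg⟩ := (H.inj i).out A.subtype A.injective_subtype (f.codRestrict _ hf)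
  refine ⟨(Pn H i 0).subtype ∘ₗ g, fun x => (g x).2, fun x => ?_⟩
  exact congrArg Subtype.val (hg x)

theorem dichotomy [IsArtinian Rᵐᵒᵖ R] [IsNoetherian Rᵐᵒᵖ R] (H : HaradaData R) (p i : Fin H.m)
    (g : R →ₗ[Rᵐᵒᵖ] R) (hg : ∀ x, g x ∈ Pn H i 0) :
    (∀ x ∈ Pn H p 0, g x ∈ Pn H i (H.n i)) ∨
    (p = i ∧ ∃ h : R →ₗ[Rᵐᵒᵖ] R, (∀ x, h x ∈ Pn H p 0) ∧ ∀ x ∈ Pn H p 0, h (g x) = x) := by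
  rcases chain H i ((Pn H p 0).map g) (by rintro _ ⟨x, -, rfl⟩; exact hg x) (H.n i) le_rfl with
    h | ⟨s, hs, h⟩
  · left
    intro x hx
    exact h ⟨x, hx, rfl⟩
  · right
    have hmem : ∀ x : ↥(Pn H p 0), (g ∘ₗ (Pn H p 0).subtype) x ∈ Pn H i s := fun x => by
      rw [← h]; exact ⟨x, x.2, rfl⟩
    let g' : ↥(Pn H p 0) →ₗ[Rᵐᵒᵖ] ↥(Pn H i s) :=
      (g ∘ₗ (Pn H p 0).subtype).codRestrict _ hmem
    have hsurj : Function.Surjective g' := by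
      rintro ⟨y, hy⟩
      rw [← h] at hy
      obtain ⟨x, hx, rfl⟩ := hy
      exact ⟨⟨x, hx⟩, rfl⟩
    have := Pn_proj H i s hs
    have := (Pn_indec H i s hs).1
    have hinj := inj_of_surj (Pn_indec H p 0 (H.hn p)) g' hsurj
    let e := LinearEquiv.ofBijective g' ⟨hinj, hsurj⟩
    constructor
    · by_contra hpi
      obtain ⟨e'⟩ := Pn_equiv H i s hs
      exact (H.basic ⟨p, ⟨0, H.hn p⟩⟩ ⟨i, ⟨s, hs⟩⟩ (fun heq => hpi (congrArg Sigma.fst heq))).elim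
        (e.trans e'.symm)
    · obtain ⟨h', hh1, hh2⟩ := extend_inj H p (Pn H i s)
        ((Pn H p 0).subtype ∘ₗ e.symm.toLinearMap) (fun x => (e.symm x).2)
      refine ⟨h', hh1, fun x hx => ?_⟩
      have h1 := hh2 (g' ⟨x, hx⟩)
      have h2 : e.symm (g' ⟨x, hx⟩) = ⟨x, hx⟩ := e.symm_apply_apply _
      have h3 := congrArg Subtype.val h2
      exact h1.trans h3

theorem map_Pn (H : HaradaData R) (i : Fin H.m) (g : R →ₗ[Rᵐᵒᵖ] R) (hg : ∀ x, g x ∈ Pn H i 0)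
    (t : ℕ) : ∀ x ∈ Pn H i t, g x ∈ Pn H i t :=
  radSub_iter_map g (Pn H i 0) (Pn H i 0) (fun x _ => hg x) t

/-- If `g` maps `P_s` into `P_t` with `t > s`, its image lies in `rad P_n`. -/
theorem small [IsArtinian Rᵐᵒᵖ R] [IsNoetherian Rᵐᵒᵖ R] (H : HaradaData R) (i : Fin H.m)
    (g : R →ₗ[Rᵐᵒᵖ] R) (hg : ∀ x, g x ∈ Pn H i 0) {s t : ℕ} (hst : s < t) (hs : s < H.n i)
    (h : ∀ x ∈ Pn H i s, g x ∈ Pn H i t) : ∀ x ∈ Pn H i 0, g x ∈ Pn H i (H.n i) := by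
  rcases dichotomy H i i g hg with h' | ⟨-, k, hk1, hk2⟩
  · exact h'
  · exfalso
    apply Pn_not_le H i hst hs
    intro x hx
    rw [← hk2 x (Pn_anti H i (Nat.zero_le s) hx)]
    exact map_Pn H i k hk1 t _ (h x hx)

/-- `P_1 I ⊆ rad P_n`. -/
theorem mul_I [IsArtinian Rᵐᵒᵖ R] [IsNoetherian Rᵐᵒᵖ R] (H : HaradaData R) (i : Fin H.m)
    (x : R) (hx : x ∈ Pn H i 0) (r : R) (hr : r ∈ H.I) : x * r ∈ Pn H i (H.n i) := by
  have hle : H.I ≤ (Pn H i (H.n i)).comap (lmul x) := by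
    refine iSup_le ?_
    rintro ⟨p, q⟩
    obtain ⟨e⟩ := Pn_equiv H p q.1 q.2
    have hxP : ∀ y, x * y ∈ Pn H i 0 := fun y => (Pn H i 0).smul_mem (op y) hx
    obtain ⟨g, hg1, hg2⟩ := extend_inj H i (Pn H p q.1)
      (lmul x ∘ₗ (rightIdeal R (H.e p q)).subtype ∘ₗ e.symm.toLinearMap) (fun y => hxP _)
    -- the map from the right ideal into `P_{p0}`
    let φ : R →ₗ[Rᵐᵒᵖ] R := (Pn H p q.1).subtype ∘ₗ e.toLinearMap ∘ₗ
      (lmul (H.e p q)).codRestrict (rightIdeal R (H.e p q)) (fun y => by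
        rw [mem_rightIdeal (H.idem p q)]
        change H.e p q * (H.e p q * y) = H.e p q * y
        rw [← mul_assoc, H.idem p q])
    have hφ1 : ∀ y, φ y ∈ Pn H p q.1 := fun y => (e _).2
    have hφ2 : ∀ y ∈ rightIdeal R (H.e p q), g (φ y) = x * y := by
      intro y hy
      have hy' := (mem_rightIdeal (H.idem p q) y).mp hy
      rw [show φ y = ((e ⟨y, hy⟩ : ↥(Pn H p q.1)) : R) from ?_, hg2]
      · change x * ((e.symm (e ⟨y, hy⟩) : ↥(rightIdeal R (H.e p q))) : R) = x * y
        rw [e.symm_apply_apply]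
      · change ((e _ : ↥(Pn H p q.1)) : R) = _
        congr 2
        exact Subtype.ext hy'
    have hφ3 := radSub_iter_map φ (rightIdeal R (H.e p q)) (Pn H p q.1) (fun y _ => hφ1 y)
      (H.n p - q.1)
    have hiter : radSub^[H.n p - q.1] (Pn H p q.1) = Pn H p (H.n p) := by
      rw [Pn, ← Function.iterate_add_apply, Nat.sub_add_cancel q.2.le, Pn]
    rw [hiter] at hφ3
    intro y hy
    have hy0 : y ∈ rightIdeal R (H.e p q) := radSub_iter_anti _ (Nat.zero_le _) hy
    change x * y ∈ Pn H i (H.n i)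
    rw [← hφ2 y hy0]
    have hy1 : φ y ∈ Pn H p (H.n p) := hφ3 hy
    rcases dichotomy H p i g hg1 with h | ⟨rfl, -⟩
    · exact h _ (Pn_anti H p (Nat.zero_le _) hy1)
    · exact map_Pn H p g hg1 _ _ hy1
  exact hle hr

end Harada

/-- Proposition 4.4(3) and its proof.  For `1 ≤ k < l ≤ n_i` and
`1 ≤ j ≤ n_i`, the following are equivalent: (a) `Ext¹_R(P_{ik}/P_{il}, P_{ij}) = 0`;
(b) `j ≤ k` or `l < j`; (c) `Ext¹_{R̄}(P_{ik}/P_{il}, P_{ij}/rad(P_{i n_i})) = 0`, where the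
modules in (c) are regarded as right `R̄`-modules (`R̄ = R/I` is presented by a surjective
ring homomorphism `π : R → S` with kernel `I`). -/
theorem statement16 (K R : Type) [Field K] [IsAlgClosed K] [Ring R] [Algebra K R]
    [FiniteDimensional K R] (H : HaradaData R)
    (S : Type) [Ring S] (π : R →+* S) (hsurj : Function.Surjective π)
    (hker : ∀ x : R, π x = 0 ↔ x ∈ H.I)
    (i : Fin H.m) (j k l : Fin (H.n i)) (hkl : k < l) :
    (Ext1Zero Rᵐᵒᵖ (H.Quot i k l) ↥(H.P i j) ↔ (j ≤ k ∨ l < j)) ∧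
    (∀ (X Y : ModuleCat.{0} Sᵐᵒᵖ),
      Nonempty (RestrictRight π ↥X ≃ₗ[Rᵐᵒᵖ] H.Quot i k l) →
      Nonempty (RestrictRight π ↥Y ≃ₗ[Rᵐᵒᵖ]
        (↥(H.P i j) ⧸ Submodule.comap (H.P i j).subtype (radSub (H.P i (H.last i))))) →
      (Ext1Zero Sᵐᵒᵖ ↥X ↥Y ↔ (j ≤ k ∨ l < j))) := by
  have hfin : Module.Finite Rᵐᵒᵖ R := by
    refine ⟨⟨{1}, ?_⟩⟩
    rw [eq_top_iff]
    intro x _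
    rw [Finset.coe_singleton, Submodule.mem_span_singleton]
    exact ⟨op x, one_mul x⟩
  have hfd : Module.Finite K Rᵐᵒᵖ := Module.Finite.equiv (opLinearEquiv K : R ≃ₗ[K] Rᵐᵒᵖ)
  have hArt : IsArtinianRing Rᵐᵒᵖ := IsArtinianRing.of_finite K Rᵐᵒᵖ
  have hA : IsArtinian Rᵐᵒᵖ R := inferInstance
  have hN : IsNoetherian Rᵐᵒᵖ R := inferInstance
  have hkl' : k.1 < l.1 := hkl
  have hlk : H.P i l ≤ H.P i k := Pn_anti H i hkl'.le
  have hP0 : ∀ t : Fin (H.n i), H.P i t ≤ Pn H i 0 := fun t => Pn_anti H i (Nat.zero_le _)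
  have hproj : ∀ t : Fin (H.n i), Module.Projective Rᵐᵒᵖ ↥(H.P i t) :=
    fun t => Pn_proj H i t.1 t.2
  have hpk := hproj k
  have hpl := hproj l
  let L : Submodule Rᵐᵒᵖ ↥(H.P i k) := Submodule.comap (H.P i k).subtype (H.P i l)
  let eL : ↥L ≃ₗ[Rᵐᵒᵖ] ↥(H.P i l) := Submodule.comapSubtypeEquivOfLe hlk
  have hL : Module.Projective Rᵐᵒᵖ ↥L := Module.Projective.of_equiv' eL.symm
  -- a map `L → P_j` extends to an endomorphism of `R` with image in `P_0`
  have hext : ∀ f : ↥L →ₗ[Rᵐᵒᵖ] ↥(H.P i j), ∃ g : R →ₗ[Rᵐᵒᵖ] R, (∀ x, g x ∈ Pn H i 0) ∧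
      ∀ x : ↥L, g x = f x := by
    intro f
    obtain ⟨g, hg1, hg2⟩ := extend_inj H i (H.P i l)
      ((H.P i j).subtype ∘ₗ f ∘ₗ eL.symm.toLinearMap) (fun x => hP0 j (f (eL.symm x)).2)
    refine ⟨g, hg1, fun x => ?_⟩
    have h1 := hg2 (eL x)
    have h2 : ((eL x : ↥(H.P i l)) : R) = x := rfl
    rw [h2] at h1
    rw [h1]
    simp
  -- (b) implies that maps extend
  have hb : (j ≤ k ∨ l < j) → ∀ f : ↥L →ₗ[Rᵐᵒᵖ] ↥(H.P i j),
      ∃ F : ↥(H.P i k) →ₗ[Rᵐᵒᵖ] ↥(H.P i j), ∀ x : ↥L, F x = f x := by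
    intro hjk f
    obtain ⟨g, hg1, hg2⟩ := hext f
    have hmem : ∀ x : ↥(H.P i k), (g ∘ₗ (H.P i k).subtype) x ∈ H.P i j := by
      intro x
      rcases hjk with h | h
      · exact Pn_anti H i (show j.1 ≤ k.1 from h) (map_Pn H i g hg1 k.1 x x.2)
      · refine Pn_anti H i j.2.le (small H i g hg1 (show l.1 < j.1 from h) l.2 ?_ x (hP0 k x.2))
        intro y hy
        have := hg2 ⟨⟨y, hlk hy⟩, hy⟩
        change g y = _ at this
        rw [this]
        exact (f _).2
    refine ⟨(g ∘ₗ (H.P i k).subtype).codRestrict _ hmem, fun x => Subtype.ext (hg2 x)⟩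
  let Z : Submodule Rᵐᵒᵖ ↥(H.P i j) :=
    Submodule.comap (H.P i j).subtype (radSub (H.P i (H.last i)))
  have hZ : ∀ x : ↥(H.P i j), x ∈ Z ↔ (x : R) ∈ Pn H i (H.n i) := by
    intro x
    rw [← Pn_last]
    rfl
  -- if `k < j ≤ l`, then the inclusion does not extend, even modulo `Z`
  have hnb : k < j → ∀ hjl : j ≤ l, ¬ ∃ F : ↥(H.P i k) →ₗ[Rᵐᵒᵖ] (↥(H.P i j) ⧸ Z), ∀ x : ↥L,
      F x = Z.mkQ ⟨x.1.1, Pn_anti H i (show j.1 ≤ l.1 from hjl) x.2⟩ := by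
    rintro hkj hjl ⟨F, hF⟩
    obtain ⟨F', hF'⟩ := Module.projective_lifting_property Z.mkQ F Z.mkQ_surjective
    obtain ⟨g, hg1, hg2⟩ := extend_inj H i (H.P i k) ((H.P i j).subtype ∘ₗ F')
      (fun x => hP0 j (F' x).2)
    have hs := small H i g hg1 (show k.1 < j.1 from hkj) k.2 (fun x hx => by
      rw [hg2 ⟨x, hx⟩]
      exact (F' _).2)
    apply Pn_not_le H i l.2 l.2
    intro x hx
    have h1 := hF ⟨⟨x, hlk hx⟩, hx⟩
    have h2 : Z.mkQ (F' ⟨x, hlk hx⟩) = F ⟨x, hlk hx⟩ := LinearMap.congr_fun hF' _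
    have h3 : F' ⟨x, hlk hx⟩ ∈ Z := by
      rw [hZ]
      have := hs x (hP0 l hx)
      rw [hg2 ⟨x, hlk hx⟩] at this
      exact this
    have h4 : Z.mkQ (F' ⟨x, hlk hx⟩) = 0 := (Submodule.Quotient.mk_eq_zero _).mpr h3
    rw [← h2, h4] at h1
    have h5 := (Submodule.Quotient.mk_eq_zero _).mp h1.symm
    exact (hZ _).mp h5
  refine ⟨⟨fun hE => ?_, fun h => ext1_of_extend L (hb h)⟩, ?_⟩
  · by_contra hcon
    push Not at hcon
    obtain ⟨F, hF⟩ := extend_of_ext1 L hE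
      (((H.P i k).subtype ∘ₗ L.subtype).codRestrict (H.P i j)
        (fun x => Pn_anti H i (show j.1 ≤ l.1 from hcon.2) x.2))
    exact hnb hcon.1 hcon.2 ⟨Z.mkQ ∘ₗ F, fun x => congrArg Z.mkQ (hF x)⟩
  · rintro X Y ⟨eX⟩ ⟨eY⟩
    constructor
    · intro hE
      by_contra hcon
      push Not at hcon
      have hjl : j.1 ≤ l.1 := hcon.2
      obtain ⟨F, hF⟩ := extend_of_ext1_restrict π hsurj L eX eY hE
        (Z.mkQ ∘ₗ ((H.P i k).subtype ∘ₗ L.subtype).codRestrict (H.P i j)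
          (fun x => Pn_anti H i hjl x.2))
        (by
          intro r x hr
          obtain ⟨x, rfl⟩ := Z.mkQ_surjective x
          rw [← map_smul]
          refine (Submodule.Quotient.mk_eq_zero _).mpr ((hZ _).mpr ?_)
          exact mul_I H i x (hP0 j x.2) r ((hker r).mp hr))
        (by
          intro r x hr
          have hm : (x : R) * r ∈ Pn H i (H.n i) :=
            mul_I H i x (hP0 k x.2) r ((hker r).mp hr)
          refine ⟨⟨op r • x, Pn_anti H i l.2.le hm⟩, rfl, ?_⟩
          exact (Submodule.Quotient.mk_eq_zero _).mpr ((hZ _).mpr hm))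
      exact hnb hcon.1 hcon.2 ⟨F, hF⟩
    · intro h
      refine ext1_restrict π hsurj (ext1_equiv eX eY (ext1_of_extend L ?_))
      intro f
      obtain ⟨f', hf'⟩ := Module.projective_lifting_property Z.mkQ f Z.mkQ_surjective
      obtain ⟨F, hF⟩ := hb h f'
      refine ⟨Z.mkQ ∘ₗ F, fun x => ?_⟩
      rw [LinearMap.comp_apply, hF]
      exact LinearMap.congr_fun hf' x
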